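/- arXiv:1805.07759 — 2 statements merged into one kernel-verified Lean document; each statement's English description precedes it below -/
import Mathlib

section
/- Let M ∈ M_ℂ(2n,2n) be skew-symmetric with J·conj(M) = M·J. Then there exist a quaternionic unitary matrix 𝓔 ∈ U_ℍ(n) and real numbers ν₀,…,ν_{n−1} such that τ(𝓔)ᵗ·M·τ(𝓔) = [[0, D],[−D, 0]] in block form, where D = diag(ν₀,…,ν_{n−1}). -/
open scoped Quaternion
open Matrix Sum

noncomputable section

/-- The complex part `a` in the decomposition `q = a + b·j` of a quaternion. -/
def qa (q : ℍ[ℝ]) : ℂ := ⟨q.re, q.imI⟩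

/-- The complex part `b` in the decomposition `q = a + b·j` of a quaternion. -/
def qb (q : ℍ[ℝ]) : ℂ := ⟨q.imJ, q.imK⟩

/-- Entrywise complex conjugation of a complex matrix. -/
def conjM {m k : Type*} (M : Matrix m k ℂ) : Matrix m k ℂ := M.map (starRingEnd ℂ)

/-- The embedding τ : M_ℍ(p,m) → M_ℂ(2p,2m), τ(a + b·j) = [[a, −b],[conj b, conj a]]. -/
def tau {p m : ℕ} (M : Matrix (Fin p) (Fin m) ℍ[ℝ]) :
    Matrix (Fin p ⊕ Fin p) (Fin m ⊕ Fin m) ℂ :=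
  Matrix.fromBlocks (M.map qa) (-(M.map qb)) (conjM (M.map qb)) (conjM (M.map qa))

/-- The standard symplectic matrix J = [[0, Iₙ],[−Iₙ, 0]]. -/
def Jmat (n : ℕ) : Matrix (Fin n ⊕ Fin n) (Fin n ⊕ Fin n) ℂ :=
  Matrix.fromBlocks 0 1 (-1) 0

/-- index set {0,…,2n−1}, as two blocks. -/
abbrev Idx (n : ℕ) := Fin n ⊕ Fin n

/-- ℂ^{2n}. -/
abbrev Vc (n : ℕ) := Idx n → ℂ

/-- The exterior algebra of ℂ^{2n}. -/
abbrev EA (n : ℕ) := ExteriorAlgebra ℂ (Vc n)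

/-- Basis 1-vectors ω^A of the exterior algebra. -/
def ω {n : ℕ} (A : Idx n) : EA n := ExteriorAlgebra.ι ℂ (Pi.single A 1)

/-- Ω_{2n} = ω⁰∧ω^n∧ω¹∧ω^{n+1}∧…∧ω^{n−1}∧ω^{2n−1}. -/
def Ωn (n : ℕ) : EA n := (List.ofFn fun l : Fin n => ω (inl l) * ω (inr l)).prod

/-- β_n = Σ_l ω^l∧ω^{n+l}. -/
def βn (n : ℕ) : EA n := ∑ l : Fin n, ω (inl l) * ω (inr l)

/-- Induced action of a 2n×2n complex matrix on the exterior algebra,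
determined by N.ω^A = Σ_B N_{AB} ω^B. -/
def actE {n : ℕ} (N : Matrix (Idx n) (Idx n) ℂ) : EA n →ₐ[ℂ] EA n :=
  ExteriorAlgebra.map (Matrix.mulVecLin Nᵀ)

/-- ℝ^{4n}. -/
abbrev V4 (n : ℕ) := Fin (4 * n) → ℝ

/-- The coordinate index 4l+β. -/
def X {n : ℕ} (l : Fin n) (β : Fin 4) : Fin (4 * n) :=
  ⟨4 * l.val + β.val, by have h1 := l.isLt; have h2 := β.isLt; omega⟩

/-- Partial derivative of a complex-valued function on ℝ^{4n}. -/
def pd {n : ℕ} (a : Fin (4 * n)) (f : V4 n → ℂ) : V4 n → ℂ :=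
  fun q => fderiv ℝ f q (Pi.single a 1)

/-- The operators ∇_{Aα}, α = 0' (α=0) or 1' (α=1). -/
def nabla {n : ℕ} (A : Idx n) (α : Fin 2) (f : V4 n → ℂ) : V4 n → ℂ :=
  fun q =>
    match A with
    | Sum.inl l =>
        if α = 0 then pd (X l 0) f q + Complex.I * pd (X l 1) f q
        else -pd (X l 2) f q - Complex.I * pd (X l 3) f q
    | Sum.inr l =>
        if α = 0 then pd (X l 2) f q - Complex.I * pd (X l 3) f q
        else pd (X l 0) f q - Complex.I * pd (X l 1) f q

/-- ∇_{Aα} applied to a real-valued function. -/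
def nablaR {n : ℕ} (A : Idx n) (α : Fin 2) (u : V4 n → ℝ) : V4 n → ℂ :=
  nabla A α (fun x => ((u x : ℝ) : ℂ))

/-- Δ_{AB}u = ½(∇_{A0'}∇_{B1'}u − ∇_{B0'}∇_{A1'}u). -/
def Delta {n : ℕ} (A B : Idx n) (u : V4 n → ℝ) : V4 n → ℂ :=
  fun q => (1 / 2 : ℂ) *
    (nabla A 0 (nabla B 1 (fun x => ((u x : ℝ) : ℂ))) q
      - nabla B 0 (nabla A 1 (fun x => ((u x : ℝ) : ℂ))) q)

/-- The Baston operator Δu = Σ_{A,B} Δ_{AB}u · ω^A∧ω^B. -/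
def Baston {n : ℕ} (u : V4 n → ℝ) (q : V4 n) : EA n :=
  ∑ A : Idx n, ∑ B : Idx n, Delta A B u q • (ω A * ω B)

/-- The quaternion units. -/
def iH : ℍ[ℝ] := ⟨0, 1, 0, 0⟩
def jH : ℍ[ℝ] := ⟨0, 0, 1, 0⟩
def kH : ℍ[ℝ] := ⟨0, 0, 0, 1⟩

/-- Partial derivative of a quaternion-valued function on ℝ^{4n}. -/
def pdH {n : ℕ} (a : Fin (4 * n)) (f : V4 n → ℍ[ℝ]) : V4 n → ℍ[ℝ] :=
  fun q => fderiv ℝ f q (Pi.single a 1)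

/-- Partial derivative of a real-valued function on ℝ^{4n}. -/
def pdR {n : ℕ} (a : Fin (4 * n)) (f : V4 n → ℝ) : V4 n → ℝ :=
  fun q => fderiv ℝ f q (Pi.single a 1)

/-- ∂u/∂q_k = (∂_{x_{4k}} − i∂_{x_{4k+1}} − j∂_{x_{4k+2}} − k∂_{x_{4k+3}})u for real u. -/
def dq {n : ℕ} (k : Fin n) (u : V4 n → ℝ) : V4 n → ℍ[ℝ] :=
  fun q => ⟨pdR (X k 0) u q, -pdR (X k 1) u q, -pdR (X k 2) u q, -pdR (X k 3) u q⟩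

/-- ∂/∂q̄_l = ∂_{x_{4l}} + i∂_{x_{4l+1}} + j∂_{x_{4l+2}} + k∂_{x_{4l+3}} on ℍ-valued functions. -/
def dqbar {n : ℕ} (l : Fin n) (f : V4 n → ℍ[ℝ]) : V4 n → ℍ[ℝ] :=
  fun q => pdH (X l 0) f q + iH * pdH (X l 1) f q + jH * pdH (X l 2) f q + kH * pdH (X l 3) f q

/-- The quaternionic Hessian of a real function u. -/
def Hess {n : ℕ} (u : V4 n → ℝ) (q : V4 n) : Matrix (Fin n) (Fin n) ℍ[ℝ] :=
  Matrix.of fun l k => dqbar l (dq k u) q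

/-- ω^I = ω^{i₁}∧…∧ω^{i_p} for a multi-index I. -/
def ωProd {n p : ℕ} (I : Fin p → Idx n) : EA n :=
  (List.ofFn fun j => ω (I j)).prod

/-- The Λ^pℂ^{2n}-valued function with coefficient functions f: F = Σ_I f_I ω^I. -/
def formVal {n p : ℕ} (f : (Fin p → Idx n) → V4 n → ℂ) (q : V4 n) : EA n :=
  ∑ I : Fin p → Idx n, f I q • ωProd I

/-- Coefficients of d_α F for F with coefficients f:
d_αF = Σ_{A,I} ∇_{Aα}f_I · ω^A∧ω^I. -/
def dcoef {n p : ℕ} (α : Fin 2) (f : (Fin p → Idx n) → V4 n → ℂ) :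
    (Fin (p + 1) → Idx n) → V4 n → ℂ :=
  fun J => nabla (J 0) α (f (Fin.tail J))

/-- Coefficients of the wedge product F∧G. -/
def wedgeCoef {n p q : ℕ} (f : (Fin p → Idx n) → V4 n → ℂ)
    (g : (Fin q → Idx n) → V4 n → ℂ) : (Fin (p + q) → Idx n) → V4 n → ℂ :=
  fun J x => f (fun i => J (Fin.castAdd q i)) x * g (fun i => J (Fin.natAdd p i)) x

/-- The complex coordinate functions z^{Aα}. -/
def zc {n : ℕ} (A : Idx n) (α : Fin 2) : V4 n → ℂ :=
  fun x =>
    match A with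
    | Sum.inl l => if α = 0 then ⟨x (X l 0), -x (X l 1)⟩ else ⟨-x (X l 2), x (X l 3)⟩
    | Sum.inr l => if α = 0 then ⟨x (X l 2), x (X l 3)⟩ else ⟨x (X l 0), x (X l 1)⟩

/-- The quaternionic vector associated to a point of ℝ^{4n}. -/
def quatv {n : ℕ} (v : V4 n) : Fin n → ℍ[ℝ] :=
  fun l => ⟨v (X l 0), v (X l 1), v (X l 2), v (X l 3)⟩

/-- The four real components of a quaternion. -/
def comp4 (q : ℍ[ℝ]) : Fin 4 → ℝ := ![q.re, q.imI, q.imJ, q.imK]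

/-- The real-linear action of a quaternionic matrix 𝓤 on ℝ^{4n} ≅ ℍⁿ, q ↦ 𝓤q. -/
def act {n : ℕ} (U : Matrix (Fin n) (Fin n) ℍ[ℝ]) (v : V4 n) : V4 n :=
  fun a => comp4 ((U *ᵥ quatv v) ⟨a.val / 4, by have := a.isLt; omega⟩)
    ⟨a.val % 4, by omega⟩


theorem q7_qa_mul (x y : ℍ[ℝ]) : qa (x * y) = qa x * qa y - qb x * (starRingEnd ℂ) (qb y) := by
  apply Complex.ext <;> simp [qa, qb] <;> ring

theorem q7_qb_mul (x y : ℍ[ℝ]) : qb (x * y) = qa x * qb y + qb x * (starRingEnd ℂ) (qa y) := by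
  apply Complex.ext <;> simp [qa, qb] <;> ring

theorem q7_qa_sum {ι : Type*} (s : Finset ι) (f : ι → ℍ[ℝ]) :
    qa (∑ i ∈ s, f i) = ∑ i ∈ s, qa (f i) := by
  let g : ℍ[ℝ] →+ ℂ := ⟨⟨qa, by apply Complex.ext <;> simp [qa]⟩,
    fun x y => by apply Complex.ext <;> simp [qa]⟩
  exact map_sum g f s

theorem q7_qb_sum {ι : Type*} (s : Finset ι) (f : ι → ℍ[ℝ]) :
    qb (∑ i ∈ s, f i) = ∑ i ∈ s, qb (f i) := by
  let g : ℍ[ℝ] →+ ℂ := ⟨⟨qb, by apply Complex.ext <;> simp [qb]⟩,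
    fun x y => by apply Complex.ext <;> simp [qb]⟩
  exact map_sum g f s

theorem q7_ext {x y : ℍ[ℝ]} (h1 : qa x = qa y) (h2 : qb x = qb y) : x = y := by
  simp only [qa, qb, Complex.mk.injEq] at h1 h2
  exact QuaternionAlgebra.ext h1.1 h1.2 h2.1 h2.2

theorem q7_tau_mul {p m k : ℕ} (A : Matrix (Fin p) (Fin m) ℍ[ℝ]) (B : Matrix (Fin m) (Fin k) ℍ[ℝ]) :
    tau (A * B) = tau A * tau B := by
  ext i j
  rcases i with i | i <;> rcases j with j | j <;>
    simp [tau, conjM, Matrix.mul_apply, q7_qa_sum, q7_qb_sum, q7_qa_mul, q7_qb_mul,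
      Finset.sum_add_distrib, Finset.sum_sub_distrib, Finset.sum_neg_distrib] <;>
    try ring

theorem q7_tau_star {p m : ℕ} (A : Matrix (Fin p) (Fin m) ℍ[ℝ]) :
    tau Aᴴ = (tau A)ᴴ := by
  ext i j
  rcases i with i | i <;> rcases j with j | j <;>
    apply Complex.ext <;> simp [tau, conjM, qa, qb]

theorem q7_tau_inj {p m : ℕ} {A B : Matrix (Fin p) (Fin m) ℍ[ℝ]} (h : tau A = tau B) : A = B := by
  ext1 i j
  apply q7_ext
  · have := congrFun (congrFun h (inl i)) (inl j)
    simpa [tau] using this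
  · have := congrFun (congrFun h (inl i)) (inr j)
    simpa [tau] using this

theorem q7_tau_one {p : ℕ} : tau (1 : Matrix (Fin p) (Fin p) ℍ[ℝ]) = 1 := by
  ext i j
  rcases i with i | i <;> rcases j with j | j <;>
    by_cases h : i = j <;> apply Complex.ext <;> simp [tau, conjM, qa, qb, Matrix.one_apply, h]

theorem q7_tau_J {p : ℕ} (A : Matrix (Fin p) (Fin p) ℍ[ℝ]) :
    (tau A)ᵀ * Jmat p = Jmat p * (tau A)ᴴ := by
  simp only [tau, Jmat, Matrix.fromBlocks_transpose, Matrix.fromBlocks_conjTranspose,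
    Matrix.fromBlocks_multiply]
  congr 1 <;> ext i j <;> simp [conjM]

/-- The complex vector of a quaternionic vector. -/
def q7phi {m : ℕ} (e : Fin m → ℍ[ℝ]) : Idx m → ℂ :=
  Sum.elim (fun l => qa (e l)) (fun l => (starRingEnd ℂ) (qb (e l)))

theorem q7phi_mulVec {p m : ℕ} (A : Matrix (Fin p) (Fin m) ℍ[ℝ]) (e : Fin m → ℍ[ℝ]) :
    q7phi (A *ᵥ e) = tau A *ᵥ q7phi e := by
  ext i
  rcases i with i | i <;>
    simp [q7phi, tau, conjM, Matrix.mulVec, dotProduct, q7_qa_sum, q7_qb_sum, q7_qa_mul,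
      q7_qb_mul, Finset.sum_add_distrib, Finset.sum_sub_distrib, Finset.sum_neg_distrib] <;>
    try ring

theorem q7phi_inj {m : ℕ} {e f : Fin m → ℍ[ℝ]} (h : q7phi e = q7phi f) : e = f := by
  funext l
  apply q7_ext
  · simpa [q7phi] using congrFun h (inl l)
  · exact (starRingEnd ℂ).injective (congrFun h (inr l))

theorem q7phi_surj {m : ℕ} (w : Idx m → ℂ) : ∃ e : Fin m → ℍ[ℝ], q7phi e = w := by
  refine ⟨fun l => ⟨(w (inl l)).re, (w (inl l)).im, (w (inr l)).re, -(w (inr l)).im⟩, ?_⟩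
  ext i
  rcases i with i | i <;> apply Complex.ext <;> simp [q7phi, qa, qb]

theorem q7phi_zero {m : ℕ} : q7phi (0 : Fin m → ℍ[ℝ]) = 0 := by
  ext i
  rcases i with i | i <;> apply Complex.ext <;> simp [q7phi, qa, qb]

theorem q7phi_smul {m : ℕ} (r : ℝ) (e : Fin m → ℍ[ℝ]) : q7phi (r • e) = (r : ℂ) • q7phi e := by
  ext i
  rcases i with i | i <;> apply Complex.ext <;> simp [q7phi, qa, qb]

theorem q7_real {m : Type*} [Fintype m] (H : Matrix m m ℂ) (hH : Hᴴ = H) (w : m → ℂ) (hw : w ≠ 0)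
    (μ : ℂ) (h : H *ᵥ w = μ • w) : ∃ r : ℝ, μ = r := by
  have h1 : star w ⬝ᵥ (H *ᵥ w) = star (H *ᵥ w) ⬝ᵥ w := by
    rw [Matrix.star_mulVec, hH, Matrix.dotProduct_mulVec]
  rw [h, star_smul, dotProduct_smul, smul_dotProduct, smul_eq_mul, smul_eq_mul] at h1
  have h2 : star w ⬝ᵥ w ≠ 0 := by
    intro h0
    open scoped ComplexOrder in
    exact hw (dotProduct_star_self_eq_zero.1 h0)
  have h3 := mul_right_cancel₀ h2 h1
  exact ⟨μ.re, (Complex.conj_eq_iff_re.1 h3.symm).symm⟩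

theorem q7_step {n k : ℕ} (hk : k < n) (A : Matrix (Fin n) (Fin n) ℍ[ℝ]) (hA : Aᴴ = A)
    (E : Matrix (Fin n) (Fin k) ℍ[ℝ]) (ν : Fin k → ℝ)
    (hν : A * E = E * Matrix.diagonal fun i => (ν i : ℍ[ℝ])) :
    ∃ (e : Fin n → ℍ[ℝ]) (r : ℝ), Eᴴ *ᵥ e = 0 ∧ A *ᵥ e = r • e ∧
      ∑ l, star (e l) * e l = 1 := by
  let W : Submodule ℂ (Idx n → ℂ) := LinearMap.ker (tau Eᴴ).mulVecLin
  have hW : W ≠ ⊥ := by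
    apply LinearMap.ker_ne_bot_of_finrank_lt
    simp
    omega
  have hcomm : Eᴴ * A = (Matrix.diagonal fun i => (ν i : ℍ[ℝ])) * Eᴴ := by
    have := congrArg Matrix.conjTranspose hν
    rw [Matrix.conjTranspose_mul, Matrix.conjTranspose_mul, hA,
      Matrix.diagonal_conjTranspose] at this
    rw [this]
    congr 2
    ext1 i
    simp
  have hinv : ∀ x ∈ W, (tau A).mulVecLin x ∈ W := by
    intro x hx
    have hx' : tau Eᴴ *ᵥ x = 0 := hx
    change tau Eᴴ *ᵥ (tau A *ᵥ x) = 0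
    rw [Matrix.mulVec_mulVec, ← q7_tau_mul, hcomm, q7_tau_mul, ← Matrix.mulVec_mulVec, hx',
      Matrix.mulVec_zero]
  have : Nontrivial W := Submodule.nontrivial_iff_ne_bot.2 hW
  obtain ⟨μ, hμ⟩ := Module.End.exists_eigenvalue ((tau A).mulVecLin.restrict hinv)
  obtain ⟨w, hw⟩ := hμ.exists_hasEigenvector
  have hw1 : tau A *ᵥ (w : Idx n → ℂ) = μ • (w : Idx n → ℂ) :=
    congrArg Subtype.val hw.apply_eq_smul
  have hw0 : (w : Idx n → ℂ) ≠ 0 := fun h => hw.2 (Subtype.ext h)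
  have hw2 : tau Eᴴ *ᵥ (w : Idx n → ℂ) = 0 := w.2
  obtain ⟨r, rfl⟩ := q7_real (tau A) (by rw [← q7_tau_star, hA]) _ hw0 μ hw1
  obtain ⟨e, he⟩ := q7phi_surj (w : Idx n → ℂ)
  rw [← he] at hw0 hw1 hw2
  have e0 : e ≠ 0 := fun h => hw0 (by rw [h, q7phi_zero])
  have e1 : A *ᵥ e = r • e := q7phi_inj (by rw [q7phi_mulVec, hw1, q7phi_smul])
  have e2 : Eᴴ *ᵥ e = 0 := q7phi_inj (by rw [q7phi_mulVec, hw2, q7phi_zero])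
  set s : ℝ := ∑ l, Quaternion.normSq (e l) with hs
  have hspos : 0 < s := by
    obtain ⟨l, hl⟩ := Function.ne_iff.1 e0
    refine Finset.sum_pos' (fun i _ => Quaternion.normSq_nonneg) ⟨l, Finset.mem_univ _, ?_⟩
    exact lt_of_le_of_ne Quaternion.normSq_nonneg (Ne.symm (Quaternion.normSq_ne_zero.2 hl))
  refine ⟨(√s)⁻¹ • e, r, ?_, ?_, ?_⟩
  · rw [Matrix.mulVec_smul, e2, smul_zero]
  · rw [Matrix.mulVec_smul, e1, smul_comm]
  · have h1 : ∀ l, star (((√s)⁻¹ • e) l) * ((√s)⁻¹ • e) l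
        = ((s⁻¹ * Quaternion.normSq (e l) : ℝ) : ℍ[ℝ]) := by
      intro l
      rw [Quaternion.star_mul_self]
      congr 1
      simp only [Pi.smul_apply, Quaternion.normSq_smul]
      rw [inv_pow, Real.sq_sqrt hspos.le]
    simp_rw [h1]
    rw [← Quaternion.coe_one, ← inv_mul_cancel₀ hspos.ne', hs, Finset.mul_sum]
    exact (map_sum (algebraMap ℝ ℍ[ℝ]) _ _).symm

theorem q7_spectral {n : ℕ} (A : Matrix (Fin n) (Fin n) ℍ[ℝ]) (hA : Aᴴ = A) (k : ℕ) (hk : k ≤ n) :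
    ∃ (E : Matrix (Fin n) (Fin k) ℍ[ℝ]) (ν : Fin k → ℝ), Eᴴ * E = 1 ∧
      A * E = E * Matrix.diagonal fun i => (ν i : ℍ[ℝ]) := by
  induction k with
  | zero => exact ⟨0, 0, by ext1 i; exact i.elim0, by ext1 i j; exact j.elim0⟩
  | succ k ih =>
    obtain ⟨E, ν, h1, h2⟩ := ih (by omega)
    obtain ⟨e, r, g1, g2, g3⟩ := q7_step (by omega) A hA E ν h2
    have k1 : ∀ i, ∑ l, star (E l i) * e l = 0 := fun i => congrFun g1 i
    have k2 : ∀ i, ∑ l, star (e l) * E l i = 0 := fun i => by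
      have := congrArg star (k1 i)
      simpa using this
    have k3 : ∀ i j, ∑ l, star (E l i) * E l j = if i = j then 1 else 0 := fun i j => by
      have := congrFun (congrFun h1 i) j
      rwa [Matrix.one_apply] at this
    have k4 : ∀ l, ∑ m, A l m * e m = r • e l := fun l => congrFun g2 l
    have k5 : ∀ l i, ∑ m, A l m * E m i = E l i * (ν i : ℍ[ℝ]) := fun l i => by
      have := congrFun (congrFun h2 l) i
      rwa [Matrix.mul_diagonal] at this
    refine ⟨Matrix.of fun l => Fin.snoc (α := fun _ => ℍ[ℝ]) (E l) (e l),
      Fin.snoc (α := fun _ => ℝ) ν r, ?_, ?_⟩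
    · ext1 i j
      rw [Matrix.mul_apply, Matrix.one_apply]
      simp only [Matrix.conjTranspose_apply, Matrix.of_apply]
      induction i using Fin.lastCases with
      | last =>
        induction j using Fin.lastCases with
        | last => simpa using g3
        | cast j => simpa [(Fin.castSucc_lt_last j).ne'] using k2 j
      | cast i =>
        induction j using Fin.lastCases with
        | last => simpa [(Fin.castSucc_lt_last i).ne] using k1 i
        | cast j => simpa using k3 i j
    · ext1 l i
      rw [Matrix.mul_diagonal, Matrix.mul_apply]
      simp only [Matrix.of_apply]
      induction i using Fin.lastCases with
      | last =>
        simp only [Fin.snoc_last]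
        rw [k4, Quaternion.mul_coe_eq_smul]
      | cast i => simpa using k5 l i

theorem q7_main {n : ℕ} (M : Matrix (Idx n) (Idx n) ℂ) (hskew : Mᵀ = -M)
    (hreal : Jmat n * conjM M = M * Jmat n) :
    ∃ A : Matrix (Fin n) (Fin n) ℍ[ℝ], Aᴴ = A ∧ Jmat n * tau A = M := by
  obtain ⟨P, Q, R, S, rfl⟩ : ∃ P Q R S, M = Matrix.fromBlocks P Q R S :=
    ⟨_, _, _, _, (Matrix.fromBlocks_toBlocks M).symm⟩
  rw [Matrix.fromBlocks_transpose, Matrix.fromBlocks_neg, Matrix.fromBlocks_inj] at hskew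
  obtain ⟨s1, s2, s3, s4⟩ := hskew
  simp only [conjM, Jmat, Matrix.fromBlocks_map, Matrix.fromBlocks_multiply,
    Matrix.fromBlocks_inj] at hreal
  obtain ⟨r1, r2, r3, r4⟩ := hreal
  have t2 : ∀ i j, R j i = -Q i j := fun i j => congrFun (congrFun s2 i) j
  have t1 : ∀ i j, P j i = -P i j := fun i j => congrFun (congrFun s1 i) j
  have u1 : ∀ i j, (starRingEnd ℂ) (R i j) = -Q i j := fun i j => by
    simpa using congrFun (congrFun r1 i) j
  have u2 : ∀ i j, (starRingEnd ℂ) (S i j) = P i j := fun i j => by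
    simpa using congrFun (congrFun r2 i) j
  obtain ⟨A, a1, a2⟩ : ∃ A : Matrix (Fin n) (Fin n) ℍ[ℝ],
      (∀ i j, qa (A i j) = -R i j) ∧ (∀ i j, qb (A i j) = S i j) :=
    ⟨fun i j => ⟨(-R i j).re, (-R i j).im, (S i j).re, (S i j).im⟩, fun _ _ => rfl, fun _ _ => rfl⟩
  have v1 : ∀ i j, R j i = (starRingEnd ℂ) (R i j) := fun i j => by rw [t2, u1]
  have v2 : ∀ i j, S j i = - S i j := fun i j => congrFun (congrFun s4 i) j
  refine ⟨A, ?_, ?_⟩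
  · ext1 i j
    have w1 : ∀ q : ℍ[ℝ], qa (star q) = (starRingEnd ℂ) (qa q) := fun q => by
      apply Complex.ext <;> simp [qa]
    have w2 : ∀ q : ℍ[ℝ], qb (star q) = - qb q := fun q => by
      apply Complex.ext <;> simp [qb]
    apply q7_ext
    · rw [Matrix.conjTranspose_apply, w1, a1, a1, map_neg, ← v1]
    · rw [Matrix.conjTranspose_apply, w2, a2, a2, v2, neg_neg]
  · simp only [tau, Jmat, Matrix.fromBlocks_multiply, Matrix.fromBlocks_inj]
    refine ⟨?_, ?_, ?_, ?_⟩ <;> ext1 i j <;> simp [conjM, a1, a2, u1, u2]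

/-- a real skew-symmetric 2-form matrix can be normalized by a
quaternionic unitary matrix: τ(𝓔)ᵗ·M·τ(𝓔) = [[0,D],[−D,0]], D real diagonal. -/
theorem stmt_7 {n : ℕ} (M : Matrix (Idx n) (Idx n) ℂ) (hskew : Mᵀ = -M)
    (hreal : Jmat n * conjM M = M * Jmat n) :
    ∃ E : Matrix (Fin n) (Fin n) ℍ[ℝ], Eᴴ * E = 1 ∧ E * Eᴴ = 1 ∧
      ∃ ν : Fin n → ℝ,
        (tau E)ᵀ * M * tau E =
          Matrix.fromBlocks 0 (Matrix.diagonal fun i => ((ν i : ℝ) : ℂ))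
            (-(Matrix.diagonal fun i => ((ν i : ℝ) : ℂ))) 0 := by
  obtain ⟨A, hA, rfl⟩ := q7_main M hskew hreal
  obtain ⟨E, ν, h1, h2⟩ := q7_spectral A hA n le_rfl
  refine ⟨E, h1, ?_, ν, ?_⟩
  · apply q7_tau_inj
    rw [q7_tau_mul, q7_tau_one, mul_eq_one_comm, ← q7_tau_mul, h1, q7_tau_one]
  · rw [← Matrix.mul_assoc, q7_tau_J, Matrix.mul_assoc, Matrix.mul_assoc, ← q7_tau_mul, h2,
      q7_tau_mul, ← Matrix.mul_assoc (tau E)ᴴ, ← q7_tau_star, ← q7_tau_mul, h1, q7_tau_one,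
      Matrix.one_mul]
    ext i j
    simp only [tau, Jmat, Matrix.fromBlocks_multiply]
    rcases i with i | i <;> rcases j with j | j <;> by_cases h : i = j <;>
      apply Complex.ext <;> simp [conjM, qa, qb, Matrix.diagonal_apply, h]

end
end

section
/- For every ε > 0 and every q ∈ ℝ^{4n}, the n-fold exterior power of the Baston operator applied to u_ε(q) = −1/(‖q‖²+ε) satisfies (Δu_ε(q))∧⋯∧(Δu_ε(q)) = 8ⁿ·n!·ε·(‖q‖²+ε)^{−(2n+1)}·Ω_{2n}. -/
open scoped Quaternion
open Matrix Sum

noncomputable section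

lemma sz_add_pow {R : Type*} [Ring R] {e t : R} (h : Commute e t) (he : e * e = 0) (k : ℕ) :
    (e + t) ^ (k + 1) = t ^ (k + 1) + ((k + 1 : ℕ) : R) * (e * t ^ k) := by
  induction k with
  | zero => simp [add_comm]
  | succ k ih =>
    rw [pow_succ' (e + t), ih]
    have h1 : t * (((k + 1 : ℕ) : R) * (e * t ^ k)) = ((k + 1 : ℕ) : R) * (e * t ^ (k + 1)) := by
      rw [← mul_assoc, ← (Nat.cast_commute (k+1) t).eq, mul_assoc, ← mul_assoc t, ← h.eq, pow_succ', mul_assoc]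
    have h2 : e * (((k + 1 : ℕ) : R) * (e * t ^ k)) = 0 := by
      rw [← mul_assoc, ← (Nat.cast_commute (k+1) e).eq, mul_assoc, ← mul_assoc e, he]; simp
    rw [add_mul, mul_add, mul_add, h1, h2, ← pow_succ', Nat.cast_succ (k+1), add_mul]
    simp only [one_mul]; abel

lemma sz_sum_pow {R ι : Type*} [Ring R] (f : ι → R) (hc : ∀ i j, Commute (f i) (f j))
    (hf : ∀ i, f i * f i = 0) (s : Finset ι) : (∑ i ∈ s, f i) ^ (s.card + 1) = 0 := by
  classical
  induction s using Finset.induction_on with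
  | empty => simp
  | insert a s ha ih =>
    rw [Finset.sum_insert ha, Finset.card_insert_of_notMem ha,
      sz_add_pow (Commute.sum_right _ _ _ fun j _ => hc a j) (hf a), pow_succ, ih]
    simp

lemma sz_sum_pow' {R : Type*} [Ring R] : ∀ (n : ℕ) (f : Fin n → R) (_ : ∀ i j, Commute (f i) (f j))
    (_ : ∀ i, f i * f i = 0), (∑ i, f i) ^ n = (n.factorial : R) * (List.ofFn f).prod := by
  intro n
  induction n with
  | zero => intro f _ _; simp
  | succ n ih =>
    intro f hc hf
    have h0 := sz_sum_pow (fun i : Fin n => f i.succ) (fun i j => hc _ _) (fun i => hf _) Finset.univ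
    rw [Finset.card_univ, Fintype.card_fin] at h0
    rw [Fin.sum_univ_succ, sz_add_pow (Commute.sum_right _ _ _ fun j _ => hc 0 _) (hf 0), h0,
      ih _ (fun i j => hc _ _) (fun i => hf _), List.ofFn_succ, List.prod_cons, zero_add,
      ← mul_assoc (f 0), ← (Nat.cast_commute n.factorial (f 0)).eq, Nat.factorial_succ, Nat.cast_mul]
    simp only [mul_assoc]

/-- The symplectic pairing dual to `βn`. -/
def spair {n : ℕ} (a b : Vc n) : ℂ := ∑ l : Fin n, (a (inl l) * b (inr l) - a (inr l) * b (inl l))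

lemma ι_anti {n : ℕ} (x y : Vc n) :
    ExteriorAlgebra.ι ℂ x * ExteriorAlgebra.ι ℂ y = -(ExteriorAlgebra.ι ℂ y * ExteriorAlgebra.ι ℂ x) :=
  eq_neg_of_add_eq_zero_left (ExteriorAlgebra.ι_add_mul_swap x y)

lemma comm_two {n : ℕ} (x y z : Vc n) :
    Commute (ExteriorAlgebra.ι ℂ x * ExteriorAlgebra.ι ℂ y) (ExteriorAlgebra.ι ℂ z) := by
  show _ * _ = _ * _
  rw [mul_assoc, ι_anti y z, mul_neg, ← mul_assoc, ι_anti x z, neg_mul, neg_neg, mul_assoc]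

lemma sq_two {n : ℕ} (x y : Vc n) :
    (ExteriorAlgebra.ι ℂ x * ExteriorAlgebra.ι ℂ y) * (ExteriorAlgebra.ι ℂ x * ExteriorAlgebra.ι ℂ y) = 0 := by
  rw [← mul_assoc, (comm_two x y x).eq, ← mul_assoc, ExteriorAlgebra.ι_sq_zero]; simp

lemma βn_comm {n : ℕ} (z : Vc n) : Commute (βn n) (ExteriorAlgebra.ι ℂ z) :=
  Commute.sum_left _ _ _ fun _ _ => comm_two _ _ _

lemma βn_pow (n : ℕ) : βn n ^ n = (n.factorial : EA n) * Ωn n :=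
  sz_sum_pow' n (fun l => ω (inl l) * ω (inr l))
    (fun _ _ => (comm_two _ _ _).mul_right (comm_two _ _ _)) (fun _ => sq_two _ _)

lemma pow_congr_right {R : Type*} [Ring R] {b b' w : R} (h : b * w = b' * w) (hc : Commute b w) (k : ℕ) :
    b ^ k * w = b' ^ k * w := by
  induction k with
  | zero => simp
  | succ k ih => rw [pow_succ, mul_assoc, hc.eq, ← mul_assoc, ih, mul_assoc, ← hc.eq, h, pow_succ, mul_assoc]

lemma βn_pow_ω {n : ℕ} (A : Idx n) : βn n ^ n * ω A = 0 := by
  classical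
  obtain ⟨l, hl⟩ : ∃ l : Fin n, (ω (inl l) * ω (inr l)) * ω A = 0 := by
    rcases A with l | l
    · refine ⟨l, ?_⟩
      unfold ω
      rw [(comm_two _ _ _).eq, ← mul_assoc, ExteriorAlgebra.ι_sq_zero, zero_mul]
    · refine ⟨l, ?_⟩
      unfold ω
      rw [mul_assoc, ExteriorAlgebra.ι_sq_zero, mul_zero]
  have h : βn n * ω A = (∑ m ∈ Finset.univ.erase l, ω (inl m) * ω (inr m)) * ω A := by
    rw [βn, ← Finset.add_sum_erase _ _ (Finset.mem_univ l), add_mul, hl, zero_add]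
  rw [pow_congr_right h (βn_comm _)]
  have h0 := sz_sum_pow (fun l : Fin n => (ω (inl l) * ω (inr l) : EA n))
    (fun _ _ => (comm_two _ _ _).mul_right (comm_two _ _ _)) (fun _ => sq_two _ _) (Finset.univ.erase l)
  rw [Finset.card_erase_of_mem (Finset.mem_univ l), Finset.card_univ, Fintype.card_fin,
    Nat.sub_add_cancel (by have := l.isLt; omega)] at h0
  rw [h0, zero_mul]

lemma ι_eq_sum {n : ℕ} (a : Vc n) : ExteriorAlgebra.ι ℂ a = ∑ A, a A • (ω A : EA n) := by
  conv_lhs => rw [pi_eq_sum_univ' a]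
  simp only [map_sum, map_smul, ω]

lemma βn_pow_ι {n : ℕ} (a : Vc n) : βn n ^ n * ExteriorAlgebra.ι ℂ a = 0 := by
  rw [ι_eq_sum, Finset.mul_sum]
  refine Finset.sum_eq_zero fun A _ => ?_
  rw [mul_smul_comm, βn_pow_ω, smul_zero]

/-- The functional with contraction of `βn` equal to `a`. -/
def dfun {n : ℕ} (a : Vc n) : Module.Dual ℂ (Vc n) :=
  ∑ l : Fin n, (a (inr l) • LinearMap.proj (inl l) - a (inl l) • LinearMap.proj (inr l))

lemma dfun_apply {n : ℕ} (a b : Vc n) : dfun a b = - spair a b := by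
  simp only [dfun, spair, LinearMap.sum_apply, ← Finset.sum_neg_distrib]
  refine Finset.sum_congr rfl fun l _ => ?_
  simp

/-- Contraction on the exterior algebra. -/
def ctr {n : ℕ} (d : Module.Dual ℂ (Vc n)) : EA n →ₗ[ℂ] EA n :=
  CliffordAlgebra.contractLeft (Q := (0 : QuadraticForm ℂ (Vc n))) d

lemma ctr_ι_mul {n : ℕ} (d : Module.Dual ℂ (Vc n)) (x : Vc n) (w : EA n) :
    ctr d (ExteriorAlgebra.ι ℂ x * w) = d x • w - ExteriorAlgebra.ι ℂ x * ctr d w :=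
  CliffordAlgebra.contractLeft_ι_mul (Q := (0 : QuadraticForm ℂ (Vc n))) d x w

lemma ctr_ι {n : ℕ} (d : Module.Dual ℂ (Vc n)) (x : Vc n) :
    ctr d (ExteriorAlgebra.ι ℂ x) = d x • 1 := by
  rw [← Algebra.algebraMap_eq_smul_one]
  exact CliffordAlgebra.contractLeft_ι (Q := (0 : QuadraticForm ℂ (Vc n))) d x

lemma ctr_βn_mul {n : ℕ} (a : Vc n) (w : EA n) :
    ctr (dfun a) (βn n * w) = ExteriorAlgebra.ι ℂ a * w + βn n * ctr (dfun a) w := by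
  classical
  have hl : ∀ l : Fin n, dfun a (Pi.single (inl l) 1) = a (inr l) := by
    intro l; simp [dfun_apply, spair, Pi.single_apply]
  have hr : ∀ l : Fin n, dfun a (Pi.single (inr l) 1) = - a (inl l) := by
    intro l; simp [dfun_apply, spair, Pi.single_apply]
  have h : ∀ l : Fin n, ctr (dfun a) (ω (inl l) * ω (inr l) * w) =
      (a (inl l) • ω (inl l) + a (inr l) • ω (inr l)) * w + ω (inl l) * ω (inr l) * ctr (dfun a) w := by
    intro l
    simp only [ω]
    rw [mul_assoc, ctr_ι_mul, ctr_ι_mul, hl, hr, mul_sub, add_mul, smul_mul_assoc, smul_mul_assoc,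
      mul_smul_comm, neg_smul, mul_assoc]
    abel
  rw [βn, Finset.sum_mul, map_sum, Finset.sum_congr rfl fun l _ => h l, Finset.sum_add_distrib,
    ← Finset.sum_mul, ← Finset.sum_mul, ι_eq_sum, Fintype.sum_sum_type, Finset.sum_add_distrib]

lemma key {n : ℕ} (k : ℕ) (hk : n = k + 1) (a b : Vc n) :
    ((k + 1 : ℕ) : ℂ) • (ExteriorAlgebra.ι ℂ a * ExteriorAlgebra.ι ℂ b * βn n ^ k) = spair a b • βn n ^ n := by
  have hstep : ∀ m : ℕ, ctr (dfun a) (βn n ^ (m + 1) * ExteriorAlgebra.ι ℂ b) =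
      ((m + 1 : ℕ) : ℂ) • (ExteriorAlgebra.ι ℂ a * ExteriorAlgebra.ι ℂ b * βn n ^ m)
        - spair a b • βn n ^ (m + 1) := by
    intro m
    induction m with
    | zero => simp [ctr_βn_mul, ctr_ι, dfun_apply, sub_eq_add_neg]
    | succ m ih =>
      have hb : Commute (βn n) (ExteriorAlgebra.ι ℂ a * ExteriorAlgebra.ι ℂ b) :=
        (βn_comm a).mul_right (βn_comm b)
      rw [pow_succ', mul_assoc, ctr_βn_mul, ih, mul_sub, mul_smul_comm, mul_smul_comm,
        ← mul_assoc (βn n), hb.eq, ((βn_comm b).pow_left (m+1)).eq, Nat.cast_succ (m+1), add_smul,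
        one_smul, ← pow_succ', mul_assoc _ (βn n), ← pow_succ', ← mul_assoc]
      abel
  have h := hstep k
  rw [← hk, βn_pow_ι, map_zero] at h
  rw [← hk]
  exact (sub_eq_zero.mp h.symm)

lemma pert_pow {n : ℕ} (a b : Vc n) (c : ℂ) :
    (βn n - c • (ExteriorAlgebra.ι ℂ a * ExteriorAlgebra.ι ℂ b)) ^ n
      = ((n.factorial : ℂ) * (1 - c * spair a b)) • Ωn n := by
  rcases n with _ | k
  · simp [spair, Ωn]
  · have hb : Commute (βn (k+1)) (ExteriorAlgebra.ι ℂ a * ExteriorAlgebra.ι ℂ b) :=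
      (βn_comm a).mul_right (βn_comm b)
    rw [sub_eq_add_neg, ← neg_smul, add_comm (βn _), sz_add_pow (hb.symm.smul_left _)
      (by rw [smul_mul_smul_comm, sq_two, smul_zero]), smul_mul_assoc]
    have hk := key k rfl a b
    have : (((k + 1 : ℕ) : EA (k+1)) * (-c • (ExteriorAlgebra.ι ℂ a * ExteriorAlgebra.ι ℂ b * βn (k+1) ^ k)))
        = (-c * spair a b) • βn (k+1) ^ (k+1) := by
      rw [mul_smul_comm, ← nsmul_eq_mul, ← Nat.cast_smul_eq_nsmul ℂ, hk, smul_smul]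
    rw [this, βn_pow, ← nsmul_eq_mul, ← Nat.cast_smul_eq_nsmul ℂ, smul_smul, ← add_smul]
    congr 1; ring

/-- The Hessian coefficient field: first derivatives of `u`. -/
def G {n : ℕ} (ε : ℝ) (b : Fin (4 * n)) : V4 n → ℂ :=
  fun x => ((2 * x b / ((∑ a, x a ^ 2) + ε) ^ 2 : ℝ) : ℂ)

lemma pd_of_hasFDerivAt {n : ℕ} (a : Fin (4 * n)) (f : V4 n → ℝ) (f' : V4 n →L[ℝ] ℝ) (q : V4 n)
    (h : HasFDerivAt f f' q) : pd a (fun x => ((f x : ℝ) : ℂ)) q = ((f' (Pi.single a 1) : ℝ) : ℂ) := by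
  have h2 := (Complex.ofRealCLM.hasFDerivAt (x := f q)).comp q h
  have h3 : fderiv ℝ (fun x => ((f x : ℝ) : ℂ)) q = Complex.ofRealCLM.comp f' := h2.fderiv
  rw [pd, h3]
  simp

lemma hasFDerivAt_r {n : ℕ} (ε : ℝ) (q : V4 n) :
    HasFDerivAt (fun x : V4 n => (∑ a, x a ^ 2) + ε)
      (∑ a, (2 * q a) • (ContinuousLinearMap.proj a : V4 n →L[ℝ] ℝ)) q := by
  refine HasFDerivAt.add_const _ ?_
  refine HasFDerivAt.fun_sum fun a _ => ?_
  have := (ContinuousLinearMap.proj (R := ℝ) (φ := fun _ : Fin (4*n) => ℝ) a).hasFDerivAt (x := q)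
  simpa using this.pow 2

lemma r_pos {n : ℕ} (ε : ℝ) (hε : 0 < ε) (q : V4 n) : 0 < (∑ a, q a ^ 2) + ε := by positivity

lemma rd_single {n : ℕ} (q : V4 n) (c : Fin (4 * n)) :
    (∑ a, (2 * q a) • (ContinuousLinearMap.proj a : V4 n →L[ℝ] ℝ)) (Pi.single c 1) = 2 * q c := by
  simp [Pi.single_apply]

lemma pd_u {n : ℕ} (ε : ℝ) (hε : 0 < ε) (b : Fin (4 * n)) :
    pd b (fun x : V4 n => ((-(1 / ((∑ a, x a ^ 2) + ε)) : ℝ) : ℂ)) = G ε b := by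
  funext q
  have hr := (r_pos ε hε q).ne'
  have h := ((hasDerivAt_inv hr).comp_hasFDerivAt q (hasFDerivAt_r ε q)).neg
  simp only [one_div]
  refine (pd_of_hasFDerivAt b _ _ q h).trans ?_
  rw [G]
  congr 1
  simp only [_root_.neg_apply, _root_.smul_apply, rd_single]
  simp only [smul_eq_mul]
  field_simp

lemma hasFDerivAt_g {n : ℕ} (ε : ℝ) (hε : 0 < ε) (b : Fin (4 * n)) (q : V4 n) :
    ∃ f' : V4 n →L[ℝ] ℝ, HasFDerivAt (fun x : V4 n => 2 * x b / ((∑ a, x a ^ 2) + ε) ^ 2) f' q ∧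
      ∀ a, f' (Pi.single a 1) = (if a = b then 2 / ((∑ a, q a ^ 2) + ε) ^ 2 else 0)
        - 8 * q a * q b / ((∑ a, q a ^ 2) + ε) ^ 3 := by
  have hr := (r_pos ε hε q).ne'
  have h1 := ((ContinuousLinearMap.proj (R := ℝ) (φ := fun _ : Fin (4*n) => ℝ) b).hasFDerivAt (x := q)).const_mul 2
  have h2 := (hasDerivAt_inv (pow_ne_zero 2 hr)).comp_hasFDerivAt q ((hasFDerivAt_r ε q).pow 2)
  refine ⟨_, by simp only [div_eq_mul_inv]; exact h1.mul h2, ?_⟩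
  intro a
  simp only [_root_.add_apply, _root_.smul_apply, rd_single]
  simp only [smul_eq_mul, ContinuousLinearMap.proj_apply, Pi.single_apply, Function.comp]
  by_cases hab : a = b
  · subst hab; simp; field_simp; ring
  · rw [if_neg hab, if_neg (Ne.symm hab)]; simp; field_simp; ring

lemma G_diff {n : ℕ} (ε : ℝ) (hε : 0 < ε) (b : Fin (4 * n)) (q : V4 n) :
    DifferentiableAt ℝ (G ε b) q := by
  obtain ⟨f', h, -⟩ := hasFDerivAt_g ε hε b q
  exact ((Complex.ofRealCLM.hasFDerivAt (x := _)).comp q h).differentiableAt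

lemma pd_G {n : ℕ} (ε : ℝ) (hε : 0 < ε) (a b : Fin (4 * n)) (q : V4 n) :
    pd a (G ε b) q = (if a = b then 2 / (((∑ a, q a ^ 2) + ε : ℝ) : ℂ) ^ 2 else 0)
        - 8 * q a * q b / (((∑ a, q a ^ 2) + ε : ℝ) : ℂ) ^ 3 := by
  obtain ⟨f', h, h'⟩ := hasFDerivAt_g ε hε b q
  refine (pd_of_hasFDerivAt a _ f' q h).trans ?_
  rw [h']
  split_ifs <;> push_cast <;> rfl

lemma X_inj {n : ℕ} (l m : Fin n) (β γ : Fin 4) : X l β = X m γ ↔ l = m ∧ β = γ := by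
  simp only [X, Fin.ext_iff]
  have := β.isLt; have := γ.isLt
  omega

lemma pd_addmul {n : ℕ} (a : Fin (4 * n)) (f g : V4 n → ℂ) (c d : ℂ) (q : V4 n)
    (hf : DifferentiableAt ℝ f q) (hg : DifferentiableAt ℝ g q) :
    pd a (fun x => c * f x + d * g x) q = c * pd a f q + d * pd a g q := by
  rw [pd, fderiv_fun_add (hf.const_mul c) (hg.const_mul d), fderiv_const_mul hf, fderiv_const_mul hg]
  simp [pd]

/-- The coefficients of `∇_{Aα}` applied to the half squared norm. -/
def zz {n : ℕ} (q : V4 n) (α : Fin 2) : Vc n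
  | Sum.inl l => if α = 0 then q (X l 0) + Complex.I * q (X l 1) else -q (X l 2) - Complex.I * q (X l 3)
  | Sum.inr l => if α = 0 then q (X l 2) - Complex.I * q (X l 3) else q (X l 0) - Complex.I * q (X l 1)

/-- Twice the standard symplectic form. -/
def jj {n : ℕ} : Idx n → Idx n → ℂ
  | Sum.inl l, Sum.inr m => if l = m then 2 else 0
  | Sum.inr l, Sum.inl m => if l = m then -2 else 0
  | _, _ => 0

lemma nabla_nabla {n : ℕ} (ε : ℝ) (hε : 0 < ε) (q : V4 n) (A B : Idx n) :
    nabla A 0 (nabla B 1 (fun x : V4 n => ((-(1 / ((∑ a, x a ^ 2) + ε)) : ℝ) : ℂ))) q =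
      2 / (((∑ a, q a ^ 2) + ε : ℝ) : ℂ) ^ 2 * jj A B
        - 8 / (((∑ a, q a ^ 2) + ε : ℝ) : ℂ) ^ 3 * (zz q 0 A * zz q 1 B) := by
  have hI : Complex.I ^ 2 = -1 := Complex.I_sq
  rcases B with m | m
  · have hB : nabla (Sum.inl m) 1 (fun x : V4 n => ((-(1 / ((∑ a, x a ^ 2) + ε)) : ℝ) : ℂ)) =
        fun x => (-1) * G ε (X m 2) x + (-Complex.I) * G ε (X m 3) x := by
      funext x
      simp only [nabla, pd_u ε hε, Fin.isValue, one_ne_zero, if_false]; ring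
    rw [hB]
    rcases A with l | l
    · simp only [nabla, if_true, pd_addmul _ _ _ _ _ _ (G_diff ε hε _ q) (G_diff ε hε _ q), pd_G ε hε,
        X_inj, jj, zz]
      simp; ring
    · simp only [nabla, if_true, pd_addmul _ _ _ _ _ _ (G_diff ε hε _ q) (G_diff ε hε _ q), pd_G ε hε,
        X_inj, jj, zz]
      by_cases h : l = m
      · subst h; simp; ring_nf; simp only [hI]; ring
      · simp [h]; ring
  · have hB : nabla (Sum.inr m) 1 (fun x : V4 n => ((-(1 / ((∑ a, x a ^ 2) + ε)) : ℝ) : ℂ)) =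
        fun x => 1 * G ε (X m 0) x + (-Complex.I) * G ε (X m 1) x := by
      funext x
      simp only [nabla, pd_u ε hε, Fin.isValue, one_ne_zero, if_false]; ring
    rw [hB]
    rcases A with l | l
    · simp only [nabla, if_true, pd_addmul _ _ _ _ _ _ (G_diff ε hε _ q) (G_diff ε hε _ q), pd_G ε hε,
        X_inj, jj, zz]
      by_cases h : l = m
      · subst h; simp; ring_nf; simp only [hI]; ring
      · simp [h]; ring
    · simp only [nabla, if_true, pd_addmul _ _ _ _ _ _ (G_diff ε hε _ q) (G_diff ε hε _ q), pd_G ε hε,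
        X_inj, jj, zz]
      simp; ring

lemma jj_anti {n : ℕ} (A B : Idx n) : jj B A = - jj A B := by
  rcases A with l | l <;> rcases B with m | m <;> simp [jj, eq_comm] <;> split_ifs <;> simp

lemma ω_anti {n : ℕ} (A B : Idx n) : (ω A * ω B : EA n) = - (ω B * ω A) := ι_anti _ _

lemma sum_jj {n : ℕ} : ∑ A : Idx n, ∑ B : Idx n, jj A B • (ω A * ω B : EA n) = (4 : ℂ) • βn n := by
  simp only [Fintype.sum_sum_type, jj, ite_smul, zero_smul, Finset.sum_ite_eq, Finset.mem_univ, if_true,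
    Finset.sum_const_zero, zero_add, add_zero, βn, Finset.smul_sum, ← Finset.sum_add_distrib]
  refine Finset.sum_congr rfl fun l _ => ?_
  rw [ω_anti (inr l) (inl l), smul_neg, ← neg_smul, ← add_smul]; norm_num

lemma sum_zz {n : ℕ} (a b : Vc n) : ∑ A : Idx n, ∑ B : Idx n, (a A * b B) • (ω A * ω B : EA n) =
    ExteriorAlgebra.ι ℂ a * ExteriorAlgebra.ι ℂ b := by
  rw [ι_eq_sum, ι_eq_sum, Finset.sum_mul_sum]
  simp only [smul_mul_smul_comm]

lemma sum_zz' {n : ℕ} (a b : Vc n) : ∑ A : Idx n, ∑ B : Idx n, (a B * b A) • (ω A * ω B : EA n) =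
    - (ExteriorAlgebra.ι ℂ a * ExteriorAlgebra.ι ℂ b) := by
  rw [← ι_anti, ← sum_zz]
  simp only [mul_comm]

lemma Baston_eq {n : ℕ} (ε : ℝ) (hε : 0 < ε) (q : V4 n) (r : ℂ) (hr : r = (((∑ a, q a ^ 2) + ε : ℝ) : ℂ)) :
    Baston (fun x => -(1 / ((∑ a, x a ^ 2) + ε))) q =
      (8 / r ^ 2) • (βn n - (1 / r) • (ExteriorAlgebra.ι ℂ (zz q 0) * ExteriorAlgebra.ι ℂ (zz q 1))) := by
  have hr0 : r ≠ 0 := by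
    rw [hr]; exact_mod_cast (r_pos ε hε q).ne'
  have h : ∀ A B, Delta A B (fun x => -(1 / ((∑ a, x a ^ 2) + ε))) q • (ω A * ω B : EA n) =
      (2 / r ^ 2) • (jj A B • (ω A * ω B : EA n)) - (4 / r ^ 3) • ((zz q 0 A * zz q 1 B) • (ω A * ω B : EA n))
       + (4 / r ^ 3) • ((zz q 0 B * zz q 1 A) • (ω A * ω B : EA n)) := by
    intro A B
    rw [smul_smul, smul_smul, smul_smul, ← sub_smul, ← add_smul]
    congr 1
    rw [Delta, nabla_nabla ε hε, nabla_nabla ε hε, ← hr, jj_anti A B]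
    ring
  simp only [Baston, h, Finset.sum_add_distrib, Finset.sum_sub_distrib, ← Finset.smul_sum, sum_jj, sum_zz, sum_zz']
  simp only [smul_smul, smul_sub, smul_neg]
  rw [← sub_eq_add_neg, sub_sub, ← add_smul]
  congr 2
  · ring
  · field_simp; norm_num

lemma sum_X {n : ℕ} (f : Fin (4 * n) → ℝ) :
    ∑ a, f a = ∑ l : Fin n, (f (X l 0) + f (X l 1) + f (X l 2) + f (X l 3)) := by
  have : ∑ a, f a = ∑ p : Fin n × Fin 4, f (X p.1 p.2) := by
    symm
    refine Fintype.sum_bijective (fun p : Fin n × Fin 4 => X p.1 p.2) ⟨?_, ?_⟩ _ _ fun _ => rfl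
    · rintro ⟨l, β⟩ ⟨m, γ⟩ h
      obtain ⟨rfl, rfl⟩ := (X_inj _ _ _ _).1 h
      rfl
    · intro a
      refine ⟨(⟨a.val / 4, by have := a.isLt; omega⟩, ⟨a.val % 4, by omega⟩), ?_⟩
      simp only [X, Fin.ext_iff]; omega
  rw [this, Fintype.sum_prod_type]
  simp only [Fin.sum_univ_four]

lemma spair_zz {n : ℕ} (q : V4 n) : spair (zz q 0) (zz q 1) = ((∑ a, q a ^ 2 : ℝ) : ℂ) := by
  have hI : Complex.I ^ 2 = -1 := Complex.I_sq
  rw [sum_X, spair, Complex.ofReal_sum]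
  refine Finset.sum_congr rfl fun l _ => ?_
  simp [zz]; ring_nf; simp only [hI]; ring

/-- (Δ(−1/(‖q‖²+ε)))^∧n = 8ⁿ·n!·ε·(‖q‖²+ε)^{−(2n+1)}·Ω_{2n}. -/
theorem stmt_16 {n : ℕ} (ε : ℝ) (hε : 0 < ε) (q : V4 n) :
    (Baston (fun x => -(1 / ((∑ a, x a ^ 2) + ε))) q) ^ n =
      ((((8 : ℝ) ^ n * n.factorial * ε / ((∑ a, q a ^ 2) + ε) ^ (2 * n + 1) : ℝ)) : ℂ) •
        Ωn n := by
  have hr0 : (((∑ a, q a ^ 2) + ε : ℝ) : ℂ) ≠ 0 := by exact_mod_cast (r_pos ε hε q).ne'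
  rw [Baston_eq ε hε q _ rfl, smul_pow, pert_pow, smul_smul, spair_zz]
  congr 1
  push_cast at hr0 ⊢
  rw [div_pow, ← pow_mul, pow_succ]
  field_simp
  ring

end
end
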